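/- Let K be a finite extension of ℚ₂ and let L = K(√d), d ∈ K^× ∖ K^{×2}, be a ramified quadratic extension of K. Then there exists an integer n ≥ 1 such that every unit u ∈ U_{n+1} is a norm from L^× (i.e. U_{n+1} ⊆ N_{L|K}(L^×)), while U_n is not contained in N_{L|K}(L^×). -/

import Mathlib

/-- An additively written, normalized (i.e. surjective onto `ℤ`) discrete
valuation on a field `K`.  All axioms are imposed at nonzero arguments only,
so the value of `v` at `0` is irrelevant.  For a finite extension `K` of
`ℚ_[p]`, the normalized valuation `v : K^× → ℤ` of the paper is such a
structure. -/
structure DValuation (K : Type*) [Field K] where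
  /-- the valuation map -/
  v : K → ℤ
  v_mul : ∀ ⦃x y : K⦄, x ≠ 0 → y ≠ 0 → v (x * y) = v x + v y
  min_le_v_add : ∀ ⦃x y : K⦄, x ≠ 0 → y ≠ 0 → x + y ≠ 0 → min (v x) (v y) ≤ v (x + y)
  v_surj : ∀ m : ℤ, ∃ x : K, x ≠ 0 ∧ v x = m

namespace DValuation

variable {K : Type*} [Field K] (w : DValuation K)

/-- `u ∈ U_m` : `u` is (a unit) congruent to `1` modulo `𝔭^m`; for `m ≥ 1`
this forces `v u = 0`, i.e. `u ∈ 𝔬^×`. -/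
def IsUnit₁ (m : ℤ) (u : K) : Prop :=
  u = 1 ∨ m ≤ w.v (u - 1)

end DValuation


namespace DValuation

variable {K : Type*} [Field K] (w : DValuation K)

/-- extended inequality `m ≤ v x`, with `v 0 = ∞` -/
def V (m : ℤ) (x : K) : Prop := x = 0 ∨ m ≤ w.v x

lemma v_one : w.v 1 = 0 := by
  have := w.v_mul (one_ne_zero (α := K)) (one_ne_zero (α := K))
  simp at this; exact this

lemma v_neg_one : w.v (-1) = 0 := by
  have h : (-1 : K) ≠ 0 := by simp
  have := w.v_mul h h
  rw [neg_mul_neg, one_mul, w.v_one] at this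
  omega

lemma v_neg (x : K) : w.v (-x) = w.v x := by
  by_cases hx : x = 0
  · simp [hx]
  have := w.v_mul (show (-1 : K) ≠ 0 by simp) hx
  rw [neg_one_mul, w.v_neg_one] at this
  omega

lemma V_zero (m : ℤ) : w.V m 0 := Or.inl rfl

lemma V_one : w.V 0 1 := Or.inr (by rw [w.v_one])

lemma V_iff {m : ℤ} {x : K} (hx : x ≠ 0) : w.V m x ↔ m ≤ w.v x := by
  simp [V, hx]

lemma V_neg {m : ℤ} {x : K} (h : w.V m x) : w.V m (-x) := by
  rcases h with h | h
  · left; simp [h]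
  · right; rwa [w.v_neg]

lemma V_mono {m n : ℤ} {x : K} (hmn : m ≤ n) (h : w.V n x) : w.V m x := by
  rcases h with h | h
  · left; exact h
  · right; omega

lemma V_add {m : ℤ} {x y : K} (hx : w.V m x) (hy : w.V m y) : w.V m (x + y) := by
  by_cases h0 : x = 0
  · simpa [h0] using hy
  by_cases h1 : y = 0
  · simpa [h1] using hx
  by_cases h2 : x + y = 0
  · left; exact h2
  have := w.min_le_v_add h0 h1 h2
  rw [w.V_iff h0] at hx
  rw [w.V_iff h1] at hy
  right; omega

lemma V_sub {m : ℤ} {x y : K} (hx : w.V m x) (hy : w.V m y) : w.V m (x - y) := by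
  rw [sub_eq_add_neg]; exact w.V_add hx (w.V_neg hy)

lemma V_mul {m n : ℤ} {x y : K} (hx : w.V m x) (hy : w.V n y) : w.V (m + n) (x * y) := by
  by_cases h0 : x = 0
  · left; simp [h0]
  by_cases h1 : y = 0
  · left; simp [h1]
  rw [w.V_iff h0] at hx
  rw [w.V_iff h1] at hy
  right; rw [w.v_mul h0 h1]; omega

lemma V_add_not {m : ℤ} {x y : K} (hx : x ≠ 0) (hm : w.v x = m) (hy : w.V (m + 1) y) :
    ¬ w.V (m + 1) (x + y) := by
  intro h
  have := w.V_sub h hy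
  rw [add_sub_cancel_right, w.V_iff hx] at this
  omega

lemma v_inv {x : K} (hx : x ≠ 0) : w.v x⁻¹ = - w.v x := by
  have := w.v_mul hx (inv_ne_zero hx)
  rw [mul_inv_cancel₀ hx, w.v_one] at this
  omega

lemma v_sq {x : K} (hx : x ≠ 0) : w.v (x ^ 2) = 2 * w.v x := by
  rw [sq, w.v_mul hx hx]; ring

lemma V_sq {m : ℤ} {x : K} (h : w.V m (x ^ 2)) : x = 0 ∨ m ≤ 2 * w.v x := by
  by_cases hx : x = 0
  · left; exact hx
  rw [w.V_iff (pow_ne_zero 2 hx), w.v_sq hx] at h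
  right; exact h

lemma V_sq_mul {m : ℤ} {x P : K} (hP : P ≠ 0) (hP1 : w.v P = 1) (h : w.V m (x ^ 2 * P)) :
    x = 0 ∨ m ≤ 2 * w.v x + 1 := by
  by_cases hx : x = 0
  · left; exact hx
  rw [w.V_iff (mul_ne_zero (pow_ne_zero 2 hx) hP), w.v_mul (pow_ne_zero 2 hx) hP, w.v_sq hx] at h
  right; omega

lemma dom {X Y C : K} {t : ℤ} (hpar : X ≠ 0 → Y ≠ 0 → w.v X ≠ w.v Y)
    (hC : ∀ m < t, w.V m X → w.V m Y → w.V (m + 1) C) (h : w.V t (X + Y + C)) :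
    w.V t X ∧ w.V t Y := by
  have key : ∀ X Y : K, (X ≠ 0 → Y ≠ 0 → w.v X ≠ w.v Y) →
    (∀ m < t, w.V m X → w.V m Y → w.V (m + 1) C) → w.V t (X + Y + C) → X ≠ 0 → w.v X < t →
    (w.V (w.v X) Y) → False := by
    intro X Y hpar hC h hX hlt hY
    have h1 := hC _ hlt (Or.inr le_rfl) hY
    have h2 : w.V (w.v X + 1) Y := by
      rcases hY with h0 | h0
      · left; exact h0
      · by_cases hY0 : Y = 0
        · left; exact hY0
        have := hpar hX hY0
        right; omega
    have h3 := w.V_add_not hX rfl (w.V_add h2 h1)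
    rw [← add_assoc] at h3
    exact h3 (w.V_mono (by omega) h)
  by_contra hcon
  have hcase : (X ≠ 0 ∧ w.v X < t ∧ w.V (w.v X) Y) ∨ (Y ≠ 0 ∧ w.v Y < t ∧ w.V (w.v Y) X) := by
    unfold V at *
    by_cases hX : X = 0
    · by_cases hY : Y = 0
      · simp [hX, hY] at hcon
      · right; simp [hX, hY] at hcon ⊢; omega
    · by_cases hY : Y = 0
      · left; simp [hX, hY] at hcon ⊢; omega
      · simp only [hX, hY, false_or, ne_eq, not_false_eq_true, true_and] at hcon ⊢; omega
  rcases hcase with ⟨h1, h2, h3⟩ | ⟨h1, h2, h3⟩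
  · exact key X Y hpar hC h h1 h2 h3
  · exact key Y X (fun a b => (hpar b a).symm) (fun m hm a b => hC m hm b a)
      (by rwa [add_comm Y X]) h1 h2 h3

lemma par {a b P : K} (hP : P ≠ 0) (hP1 : w.v P = 1) :
    a ^ 2 ≠ 0 → b ^ 2 * P ≠ 0 → w.v (a ^ 2) ≠ w.v (b ^ 2 * P) := by
  intro h1 h2
  have ha : a ≠ 0 := by rintro rfl; simp at h1
  have hb : b ≠ 0 := by rintro rfl; simp at h2
  rw [w.v_mul (pow_ne_zero 2 hb) hP, w.v_sq ha, w.v_sq hb]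
  omega

lemma V_mul' {m n k : ℤ} {x y : K} (hx : w.V m x) (hy : w.V n y) (hk : k ≤ m + n) :
    w.V k (x * y) := w.V_mono hk (w.V_mul hx hy)

/-- the residual equation hypothesis -/
def Res : Prop := ∀ ρ : K, ρ ≠ 0 → w.v ρ = 0 →
  ∃ x, w.V 0 x ∧ ∀ β, w.V 0 β → ¬ w.V 1 (β + ρ * β ^ 2 - x)

lemma caseB (hres : w.Res) (h20 : (2 : K) ≠ 0) (he : 0 < w.v 2) {P : K} (hP : P ≠ 0)
    (hP1 : w.v P = 1) :
    ∃ u : K, w.V 1 (u - 1) ∧ ∀ a b : K, a ^ 2 + b ^ 2 * P ≠ u := by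
  obtain ⟨x, hx, hβ⟩ := hres 1 one_ne_zero w.v_one
  have h2 : w.V (w.v 2) 2 := Or.inr le_rfl
  have h4 : w.V (2 * w.v 2) (4 * x) := by
    have := w.V_mul (w.V_mul h2 h2) hx
    norm_num at this
    exact w.V_mono (by omega) this
  refine ⟨1 + 4 * x, ?_, ?_⟩
  · rw [add_sub_cancel_left]; exact w.V_mono (by omega) h4
  intro a b hab
  have h := w.dom (X := (a - 1) ^ 2) (Y := b ^ 2 * P) (C := 2 * (a - 1)) (t := 2 * w.v 2)
    (w.par hP hP1) (by
      intro m hm h1 _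
      rcases w.V_sq h1 with h | h
      · left; rw [h]; simp
      · exact w.V_mul' h2 (Or.inr le_rfl) (by omega)) (by
      convert h4 using 1
      linear_combination hab)
  obtain ⟨h1, h3⟩ := h
  have ha : w.V (w.v 2) (a - 1) := by
    rcases w.V_sq h1 with h | h
    · left; exact h
    · right; omega
  have hb : w.V (w.v 2) b := by
    rcases w.V_sq_mul hP hP1 h3 with h | h
    · left; exact h
    · right; omega
  have hi : w.V (-w.v 2) (2⁻¹ : K) := Or.inr (by rw [w.v_inv h20])
  apply hβ (2⁻¹ * (a - 1)) (w.V_mul' hi ha (by omega))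
  have : 2⁻¹ * (a - 1) + 1 * (2⁻¹ * (a - 1)) ^ 2 - x
      = -((2⁻¹ * b) * ((2⁻¹ * b) * P)) := by
    field_simp
    linear_combination hab
  rw [this]
  have hbb : w.V 0 (2⁻¹ * b) := w.V_mul' hi hb (by omega)
  exact w.V_neg (w.V_mul' hbb (w.V_mul hbb (Or.inr hP1.ge)) (by omega))

lemma caseA (hres : w.Res) {P T : K} (hP : P ≠ 0)
    (hP1 : w.v P = 1) (hT : T ≠ 0) (hT1 : 1 ≤ w.v T) (hT2 : w.v T ≤ w.v 2) :
    ∃ u : K, w.V 1 (u - 1) ∧ ∀ a b : K, a ^ 2 + b ^ 2 * P + a * b * T ≠ u := by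
  obtain ⟨s, hs⟩ : ∃ s, s = w.v T := ⟨_, rfl⟩
  obtain ⟨c, hc0, hc⟩ := w.v_surj (s - 1)
  have hρ0 : c * P * T⁻¹ ≠ 0 := mul_ne_zero (mul_ne_zero hc0 hP) (inv_ne_zero hT)
  have hρ : w.v (c * P * T⁻¹) = 0 := by
    rw [w.v_mul (mul_ne_zero hc0 hP) (inv_ne_zero hT), w.v_mul hc0 hP, w.v_inv hT]; omega
  obtain ⟨x, hx, hβ⟩ := hres _ hρ0 hρ
  have h2 : w.V (w.v 2) 2 := Or.inr le_rfl
  have hTV : w.V s T := Or.inr hs.le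
  have hcV : w.V (s - 1) c := Or.inr hc.ge
  have h4 : w.V (2 * s - 1) (c * T * x) := w.V_mul' (w.V_mul hcV hTV) hx (by omega)
  refine ⟨1 + c * T * x, ?_, ?_⟩
  · rw [add_sub_cancel_left]; exact w.V_mono (by omega) h4
  intro a b hab
  have ha0 : w.V 0 a := by
    have h := w.dom (X := a ^ 2) (Y := b ^ 2 * P) (C := a * b * T) (t := 0)
      (w.par hP hP1) (by
        intro m hm h1 h3
        rcases w.V_sq h1 with h | h
        · left; rw [h]; simp
        rcases w.V_sq_mul hP hP1 h3 with h' | h'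
        · left; rw [h']; simp
        exact w.V_mul' (w.V_mul (Or.inr le_rfl) (Or.inr le_rfl)) hTV (by omega)) (by
        rw [hab]
        exact w.V_add w.V_one (w.V_mono (by omega) h4))
    rcases w.V_sq h.1 with h | h
    · left; exact h
    · right; omega
  have h := w.dom (X := (a - 1) ^ 2) (Y := b ^ 2 * P) (C := 2 * (a - 1) + a * b * T)
    (t := 2 * s - 1)
    (w.par hP hP1) (by
      intro m hm h1 h3
      refine w.V_add ?_ ?_
      · rcases w.V_sq h1 with h | h
        · left; rw [h]; simp
        · exact w.V_mul' h2 (Or.inr le_rfl) (by omega)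
      · rcases w.V_sq_mul hP hP1 h3 with h' | h'
        · left; rw [h']; simp
        exact w.V_mul' (w.V_mul ha0 (Or.inr le_rfl)) hTV (by omega)) (by
      convert h4 using 1
      linear_combination hab)
  obtain ⟨h1, h3⟩ := h
  have ha : w.V s (a - 1) := by
    rcases w.V_sq h1 with h | h
    · left; exact h
    · right; omega
  have hb : w.V (s - 1) b := by
    rcases w.V_sq_mul hP hP1 h3 with h | h
    · left; exact h
    · right; omega
  have hi : w.V (-(s - 1)) (c⁻¹ : K) := Or.inr (by rw [w.v_inv hc0, hc])
  have hiT : w.V (-s) (T⁻¹ : K) := Or.inr (by rw [w.v_inv hT, hs])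
  apply hβ (c⁻¹ * b) (w.V_mul' hi hb (by omega))
  have : c⁻¹ * b + c * P * T⁻¹ * (c⁻¹ * b) ^ 2 - x
      = -(((a - 1) * (a - 1) + 2 * (a - 1)) * (c⁻¹ * T⁻¹) + (a - 1) * b * c⁻¹) := by
    field_simp
    linear_combination hab
  rw [this]
  refine w.V_neg (w.V_add (w.V_mul' (w.V_add (m := 2 * s) (w.V_mul' ha ha (by omega))
    (w.V_mul' h2 ha (by omega))) (w.V_mul hi hiT) (by omega)) ?_)
  exact w.V_mul' (w.V_mul ha hb) hi (by omega)

end DValuation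

namespace DValuation

variable {K : Type*} [Field K] (w : DValuation K)

/-- the valuation ring -/
def O : Subring K where
  carrier := {x | w.V 0 x}
  mul_mem' := fun ha hb => w.V_mul' ha hb (by omega)
  one_mem' := w.V_one
  add_mem' := fun ha hb => w.V_add ha hb
  zero_mem' := w.V_zero 0
  neg_mem' := fun ha => w.V_neg ha

/-- the maximal ideal -/
def I : Ideal w.O where
  carrier := {x | w.V 1 (x : K)}
  add_mem' := fun ha hb => w.V_add ha hb
  zero_mem' := w.V_zero 1
  smul_mem' := fun c _ hx => w.V_mul' c.2 hx (by omega)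

lemma res_of_finite (t : Set K) (ht : t.Finite)
    (hcov : ∀ x, w.V 0 x → ∃ y ∈ t, w.V 1 (x - y)) : w.Res := by
  have hfin : Finite (w.O ⧸ w.I) := by
    have hsub : ∀ q : w.O ⧸ w.I, ∃ y ∈ t, w.V 1 ((Quotient.out q : w.O) - y) :=
      fun q => hcov _ (Quotient.out q).2
    choose g hg hg' using hsub
    have : Finite t := ht
    refine Finite.of_injective (fun q => (⟨g q, hg q⟩ : t)) ?_
    intro a b hab
    have hab' : g a = g b := congrArg Subtype.val hab
    have h1 := w.V_sub (hg' a) (hg' b)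
    rw [hab', sub_sub_sub_cancel_right] at h1
    have h2 : Ideal.Quotient.mk w.I (Quotient.out a) = Ideal.Quotient.mk w.I (Quotient.out b) :=
      Ideal.Quotient.eq.2 h1
    have h3 : ∀ q : w.O ⧸ w.I, Ideal.Quotient.mk w.I (Quotient.out q) = q :=
      fun q => Quotient.out_eq q
    rwa [h3, h3] at h2
  intro ρ hρ0 hρ
  by_contra hcon
  push Not at hcon
  have hρV : w.V 0 ρ := Or.inr hρ.ge
  have hρi : w.V 0 ρ⁻¹ := Or.inr (by rw [w.v_inv hρ0, hρ]; simp)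
  let r : w.O := ⟨ρ, hρV⟩
  let f : w.O ⧸ w.I → w.O ⧸ w.I := fun q => q + Ideal.Quotient.mk w.I r * q ^ 2
  have hsurj : Function.Surjective f := by
    intro q
    obtain ⟨x, rfl⟩ := Ideal.Quotient.mk_surjective q
    obtain ⟨β, hβ, h⟩ := hcon x x.2
    refine ⟨Ideal.Quotient.mk w.I ⟨β, hβ⟩, ?_⟩
    exact Ideal.Quotient.eq.2 h
  have hinj := Finite.injective_iff_surjective.2 hsurj
  let c : w.O := ⟨-ρ⁻¹, w.V_neg hρi⟩
  have h1 : f (Ideal.Quotient.mk w.I c) = f 0 := by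
    have : c + r * c ^ 2 = 0 := by
      apply Subtype.ext
      change -ρ⁻¹ + ρ * (-ρ⁻¹) ^ 2 = 0
      field_simp
      ring
    change Ideal.Quotient.mk w.I (c + r * c ^ 2) = _
    rw [this]
    simp [f]
  have h2 := hinj h1
  rw [Ideal.Quotient.eq_zero_iff_mem] at h2
  have h3 : w.V 1 (-ρ⁻¹) := h2
  rw [w.V_iff (neg_ne_zero.2 (inv_ne_zero hρ0)), w.v_neg, w.v_inv hρ0, hρ] at h3
  omega

lemma e_pos [Algebra ℚ_[2] K] [FiniteDimensional ℚ_[2] K]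
    (hext : ∀ x : ℚ_[2], x ≠ 0 →
      w.v (algebraMap ℚ_[2] K x) = w.v (algebraMap ℚ_[2] K 2) * x.valuation) :
    0 < w.v 2 := by
  have h2 : (algebraMap ℚ_[2] K 2) = 2 := map_ofNat _ 2
  have h20 : (2 : K) ≠ 0 := by
    rw [← h2]; exact (map_ne_zero _).2 two_ne_zero
  rw [h2] at hext
  have hnn : 0 ≤ w.v 2 := by
    have := w.V_add w.V_one w.V_one
    rw [one_add_one_eq_two, w.V_iff h20] at this
    exact this
  by_contra hle
  have he : w.v 2 = 0 := by omega
  simp only [he, zero_mul] at hext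
  obtain ⟨y, hy0, hy⟩ := w.v_surj 1
  have hyV : w.V 0 y := Or.inr (by omega)
  have hpow : ∀ n : ℕ, w.V 0 (y ^ n) := by
    intro n
    induction n with
    | zero => simpa using w.V_one
    | succ k ih => rw [pow_succ]; exact w.V_mul' ih hyV (by omega)
  have hc : ∀ c : ℚ_[2], w.V 0 (algebraMap ℚ_[2] K c) := by
    intro c
    by_cases h : c = 0
    · left; simp [h]
    · right; rw [hext c h]
  have hq : ∀ q : Polynomial ℚ_[2], w.V 0 (Polynomial.aeval y q) := by
    intro q
    induction q using Polynomial.induction_on' with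
    | add p q hp hq => rw [map_add]; exact w.V_add hp hq
    | monomial n a => rw [Polynomial.aeval_monomial]; exact w.V_mul' (hc a) (hpow n) (by omega)
  have hint : IsIntegral ℚ_[2] y := IsIntegral.of_finite _ _
  have h1 := minpoly.aeval ℚ_[2] y
  rw [← Polynomial.X_mul_divX_add (minpoly ℚ_[2] y)] at h1
  rw [map_add, map_mul, Polynomial.aeval_X, Polynomial.aeval_C] at h1
  have hc0 : (minpoly ℚ_[2] y).coeff 0 ≠ 0 := minpoly.coeff_zero_ne_zero hint hy0
  have h3 : w.V 1 (algebraMap ℚ_[2] K ((minpoly ℚ_[2] y).coeff 0)) := by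
    rw [← neg_eq_of_add_eq_zero_right h1]
    exact w.V_neg (w.V_mul' (Or.inr hy.ge) (hq _) (by omega))
  rw [w.V_iff (by simpa using hc0), hext _ hc0] at h3
  omega

open Classical in
/-- the real absolute value attached to `w` -/
noncomputable def absv (he : 0 < w.v 2) : AbsoluteValue K ℝ where
  toFun x := if x = 0 then 0 else (2 : ℝ) ^ (-(w.v x : ℝ) / (w.v 2 : ℝ))
  map_mul' x y := by
    by_cases hx : x = 0
    · simp [hx]
    by_cases hy : y = 0
    · simp [hy]
    simp only [hx, hy, mul_eq_zero, or_self, if_false]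
    rw [← Real.rpow_add (by norm_num), w.v_mul hx hy]
    congr 1
    push_cast
    ring
  nonneg' x := by
    split_ifs
    · exact le_rfl
    · positivity
  eq_zero' x := by
    constructor
    · intro h
      by_contra hx
      rw [if_neg hx] at h
      exact (Real.rpow_pos_of_pos (by norm_num : (0 : ℝ) < 2) _).ne' h
    · intro h
      simp [h]
  add_le' x y := by
    by_cases hx : x = 0
    · simp [hx]
    by_cases hy : y = 0
    · simp [hy]
    have p1 := Real.rpow_pos_of_pos (by norm_num : (0 : ℝ) < 2) (-(w.v x : ℝ) / (w.v 2 : ℝ))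
    have p2 := Real.rpow_pos_of_pos (by norm_num : (0 : ℝ) < 2) (-(w.v y : ℝ) / (w.v 2 : ℝ))
    by_cases hxy : x + y = 0
    · simp only [hx, hy, hxy, if_true, if_false]; linarith
    simp only [hx, hy, hxy, if_false]
    have he' : (0 : ℝ) < w.v 2 := by exact_mod_cast he
    have h := w.min_le_v_add hx hy hxy
    rcases min_le_iff.1 h with h | h
    · have : (2 : ℝ) ^ (-(w.v (x + y) : ℝ) / (w.v 2 : ℝ)) ≤
          (2 : ℝ) ^ (-(w.v x : ℝ) / (w.v 2 : ℝ)) := by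
        apply Real.rpow_le_rpow_of_exponent_le (by norm_num)
        have : (w.v x : ℝ) ≤ w.v (x + y) := by exact_mod_cast h
        gcongr
      linarith
    · have : (2 : ℝ) ^ (-(w.v (x + y) : ℝ) / (w.v 2 : ℝ)) ≤
          (2 : ℝ) ^ (-(w.v y : ℝ) / (w.v 2 : ℝ)) := by
        apply Real.rpow_le_rpow_of_exponent_le (by norm_num)
        have : (w.v y : ℝ) ≤ w.v (x + y) := by exact_mod_cast h
        gcongr
      linarith

open Classical in
lemma absv_apply (he : 0 < w.v 2) {x : K} (hx : x ≠ 0) :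
    w.absv he x = (2 : ℝ) ^ (-(w.v x : ℝ) / (w.v 2 : ℝ)) := if_neg hx

lemma absv_le (he : 0 < w.v 2) (m : ℤ) (x : K) :
    w.absv he x ≤ (2 : ℝ) ^ (-(m : ℝ) / (w.v 2 : ℝ)) ↔ w.V m x := by
  by_cases hx : x = 0
  · simp only [hx, map_zero, w.V_zero, iff_true]; positivity
  have he' : (0 : ℝ) < w.v 2 := by exact_mod_cast he
  rw [w.absv_apply he hx, w.V_iff hx, Real.rpow_le_rpow_left_iff (by norm_num),
    div_le_div_iff_of_pos_right he', neg_le_neg_iff, Int.cast_le]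

lemma absv_lt (he : 0 < w.v 2) (x : K) (h : w.absv he x < 1) : w.V 1 x := by
  by_cases hx : x = 0
  · left; exact hx
  have he' : (0 : ℝ) < w.v 2 := by exact_mod_cast he
  rw [w.absv_apply he hx, Real.rpow_lt_one_iff_of_pos (by norm_num)] at h
  have h' : -(w.v x : ℝ) / (w.v 2 : ℝ) < 0 := by
    rcases h with h | h
    · exact h.2
    · norm_num at h
  rw [div_neg_iff] at h'
  have h2 : (0 : ℝ) < w.v x := by
    rcases h' with h' | h' <;> linarith
  have : 0 < w.v x := by exact_mod_cast h2
  right; omega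

lemma topfacts [Algebra ℚ_[2] K] [FiniteDimensional ℚ_[2] K]
    (hext : ∀ x : ℚ_[2], x ≠ 0 →
      w.v (algebraMap ℚ_[2] K x) = w.v (algebraMap ℚ_[2] K 2) * x.valuation)
    (he : 0 < w.v 2) :
    (∃ M : ℕ, ∀ u, w.V M (u - 1) → IsSquare u) ∧
    ∃ t : Set K, t.Finite ∧ ∀ x, w.V 0 x → ∃ y ∈ t, w.V 1 (x - y) := by
  have h2 : (algebraMap ℚ_[2] K 2) = 2 := map_ofNat _ 2
  have h20 : (2 : K) ≠ 0 := by
    rw [← h2]; exact (map_ne_zero _).2 two_ne_zero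
  rw [h2] at hext
  have he' : (0 : ℝ) < w.v 2 := by exact_mod_cast he
  have hnorm : ∀ r : ℚ_[2], w.absv he (algebraMap ℚ_[2] K r) = ‖r‖ := by
    intro r
    by_cases hr : r = 0
    · simp [hr]
    rw [w.absv_apply he (by simpa using hr), hext r hr, Padic.norm_eq_zpow_neg_valuation hr,
      ← Real.rpow_intCast]
    congr 1
    push_cast
    field_simp
  let nf : NormedField K := (w.absv he).toNormedField
  have hN : ∀ x : K, ‖x‖ = w.absv he x := fun x => rfl
  let nnf : NontriviallyNormedField K :=
    { nf with
      non_trivial := ⟨algebraMap ℚ_[2] K 2⁻¹, by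
        change 1 < w.absv he _
        rw [hnorm, norm_inv]
        have : ‖(2 : ℚ_[2])‖ = 2⁻¹ := by
          have := Padic.norm_p (p := 2)
          simpa using this
        rw [this]; norm_num⟩ }
  let na : NormedAlgebra ℚ_[2] K :=
    { (inferInstance : Algebra ℚ_[2] K) with
      norm_smul_le := fun r x => by
        rw [Algebra.smul_def, norm_mul, hN (algebraMap ℚ_[2] K r), hnorm] }
  have : CompleteSpace K := FiniteDimensional.complete ℚ_[2] K
  have : ProperSpace K := FiniteDimensional.proper ℚ_[2] K
  constructor
  · have hd := hasStrictDerivAt_pow 2 (1 : K)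
    have hm := hd.map_nhds_eq (by simpa using h20)
    have hs : {u : K | IsSquare u} ∈ nhds (1 : K) := by
      rw [show (1 : K) = 1 ^ 2 by simp, ← hm]
      refine Filter.mem_map.2 (Filter.Eventually.of_forall ?_)
      intro x
      exact ⟨x, sq x⟩
    obtain ⟨ε, hε, hball⟩ := Metric.mem_nhds_iff.1 hs
    have : ∃ M : ℕ, (2 : ℝ) ^ (-(M : ℝ) / (w.v 2 : ℝ)) < ε := by
      obtain ⟨n, hn⟩ := exists_pow_lt_of_lt_one hε (by norm_num : (1 / 2 : ℝ) < 1)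
      refine ⟨n * (w.v 2).toNat, ?_⟩
      refine lt_of_eq_of_lt ?_ hn
      have hz : (((w.v 2).toNat : ℕ) : ℝ) = (w.v 2 : ℝ) := by
        have : (((w.v 2).toNat : ℕ) : ℤ) = w.v 2 := Int.toNat_of_nonneg he.le
        exact_mod_cast this
      push_cast
      rw [hz, show -((n : ℝ) * (w.v 2 : ℝ)) / (w.v 2 : ℝ) = -(n : ℝ) by field_simp,
        Real.rpow_neg (by norm_num), Real.rpow_natCast]
      simp
    obtain ⟨M, hM⟩ := this
    refine ⟨M, fun u hu => hball ?_⟩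
    rw [Metric.mem_ball, dist_eq_norm, hN]
    refine lt_of_le_of_lt ((w.absv_le he M (u - 1)).2 hu) ?_
    simpa using hM
  · obtain ⟨t, -, htf, ht⟩ := (isCompact_closedBall (0 : K) 1).finite_cover_balls one_pos
    refine ⟨t, htf, fun x hx => ?_⟩
    have hx1 : x ∈ Metric.closedBall (0 : K) 1 := by
      rw [mem_closedBall_zero_iff, hN]
      simpa using (w.absv_le he 0 x).2 hx
    obtain ⟨y, hy, hxy⟩ := Set.mem_iUnion₂.1 (ht hx1)
    refine ⟨y, hy, w.absv_lt he _ ?_⟩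
    rwa [Metric.mem_ball, dist_eq_norm, hN] at hxy

end DValuation

lemma norm_quad {K L : Type*} [Field K] [Field L] [Algebra K L] (hL2 : Module.finrank K L = 2)
    {d : K} (hd : ¬ IsSquare d) {δ : L} (hδ : δ ^ 2 = algebraMap K L d) :
    (∀ y : L, ∃ a b : K, y = algebraMap K L a + algebraMap K L b * δ) ∧
    ∀ a b : K, Algebra.norm K (algebraMap K L a + algebraMap K L b * δ) = a ^ 2 - b ^ 2 * d := by
  have hli : LinearIndependent K ![(1 : L), δ] := by
    rw [LinearIndependent.pair_iff]
    intro s t hst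
    have ht : t = 0 := by
      by_contra ht
      apply hd
      refine ⟨-(s / t), ?_⟩
      apply (algebraMap K L).injective
      rw [Algebra.smul_def, Algebra.smul_def, mul_one] at hst
      have ht' : algebraMap K L t ≠ 0 := by simpa using ht
      have : δ = algebraMap K L (-(s / t)) := by
        rw [map_neg, map_div₀]
        field_simp
        linear_combination hst
      rw [← hδ, this, map_mul, sq]
    subst ht
    simpa [Algebra.smul_def] using hst
  have : FiniteDimensional K L := Module.finite_of_finrank_pos (by omega)
  let B := basisOfLinearIndependentOfCardEqFinrank hli (by simp [hL2])
  have hB0 : B 0 = 1 := by simp [B]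
  have hB1 : B 1 = δ := by simp [B]
  constructor
  · intro y
    refine ⟨B.repr y 0, B.repr y 1, ?_⟩
    have := B.sum_repr y
    rw [Fin.sum_univ_two, hB0, hB1, Algebra.smul_def, Algebra.smul_def, mul_one] at this
    exact this.symm
  · intro a b
    have : Algebra.lmul K L (algebraMap K L a + algebraMap K L b * δ) =
        Matrix.toLin B B !![a, b * d; b, a] := by
      apply B.ext
      intro i
      rw [Matrix.toLin_self]
      fin_cases i
      · simp [Fin.sum_univ_two, hB0, hB1, Algebra.smul_def]
      · simp [Fin.sum_univ_two, hB0, hB1, Algebra.smul_def]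
        linear_combination (algebraMap K L b) * hδ
    rw [Algebra.norm_apply, this, LinearMap.det_toLin, Matrix.det_fin_two_of]
    ring

/-- For a ramified quadratic extension `L = K(√d)` of a finite extension `K`
of `ℚ₂` (ramification encoded by `w_L ∘ (K → L) = 2·w_K` for the normalized
valuations), there is an integer `n ≥ 1` such that every unit in `U_{n+1}` is
a norm from `L^×`, while `U_n` is not contained in `N_{L|K}(L^×)`. -/
theorem exists_conductor_exponent_of_ramified
    (K : Type*) [Field K] [Algebra ℚ_[2] K] [FiniteDimensional ℚ_[2] K]
    (w : DValuation K)
    (hext : ∀ x : ℚ_[2], x ≠ 0 →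
      w.v (algebraMap ℚ_[2] K x) = w.v (algebraMap ℚ_[2] K 2) * x.valuation)
    (L : Type*) [Field L] [Algebra K L] (hL2 : Module.finrank K L = 2)
    (d : K) (hd0 : d ≠ 0) (hd : ¬ IsSquare d)
    (hdL : ∃ δ : L, δ ^ 2 = algebraMap K L d)
    (wL : DValuation L)
    (hram : ∀ x : K, x ≠ 0 → wL.v (algebraMap K L x) = 2 * w.v x) :
    ∃ n : ℕ, 1 ≤ n ∧
      (∀ u : K, w.IsUnit₁ ((n : ℤ) + 1) u → ∃ y : L, y ≠ 0 ∧ Algebra.norm K y = u) ∧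
      ∃ u : K, w.IsUnit₁ (n : ℤ) u ∧ ¬ ∃ y : L, y ≠ 0 ∧ Algebra.norm K y = u := by
  have he := w.e_pos hext
  obtain ⟨⟨M, hM⟩, t, htf, ht⟩ := w.topfacts hext he
  have hres := w.res_of_finite t htf ht
  have h20 : (2 : K) ≠ 0 := by
    rw [← map_ofNat (algebraMap ℚ_[2] K) 2]; exact (map_ne_zero _).2 two_ne_zero
  have hU : ∀ (m : ℤ) (u : K), w.IsUnit₁ m u ↔ w.V m (u - 1) := by
    intro m u
    simp [DValuation.IsUnit₁, DValuation.V, sub_eq_zero]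
  simp only [hU]
  obtain ⟨δ, hδ⟩ := hdL
  obtain ⟨hrep, hnm⟩ := norm_quad hL2 hd hδ
  -- a uniformizer of `L`
  obtain ⟨π, hπ0, hπ⟩ := wL.v_surj 1
  obtain ⟨p, q, hpq⟩ := hrep π
  have hq : q ≠ 0 := by
    rintro rfl
    have hp : p ≠ 0 := by
      rintro rfl
      simp at hpq; exact hπ0 hpq
    rw [map_zero, zero_mul, add_zero] at hpq
    have := hram p hp
    rw [← hpq] at this
    omega
  have hP : p ^ 2 - q ^ 2 * d ≠ 0 := by
    intro h
    apply hd
    refine ⟨p / q, ?_⟩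
    field_simp
    linear_combination -h
  obtain ⟨P, hPdef⟩ : ∃ P, P = p ^ 2 - q ^ 2 * d := ⟨_, rfl⟩
  rw [← hPdef] at hP
  obtain ⟨π', hπ'⟩ : ∃ π', π' = algebraMap K L p - algebraMap K L q * δ := ⟨_, rfl⟩
  have hmul : π * π' = algebraMap K L P := by
    rw [hpq, hπ', hPdef]
    simp only [map_sub, map_mul, map_pow]
    linear_combination -(algebraMap K L q) ^ 2 * hδ
  have hadd : π + π' = algebraMap K L (2 * p) := by
    rw [hpq, hπ']
    simp only [map_mul, map_ofNat]
    ring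
  have hπ'0 : π' ≠ 0 := by
    rintro rfl
    rw [mul_zero] at hmul
    exact hP ((map_eq_zero (algebraMap K L)).1 hmul.symm)
  have hvP := hram P hP
  rw [← hmul, wL.v_mul hπ0 hπ'0, hπ] at hvP
  have hπ1 : wL.v π' = 1 := by
    by_cases hp : p = 0
    · have : π' = -π := by
        rw [hp, mul_zero, map_zero] at hadd
        linear_combination hadd
      rw [this, wL.v_neg, hπ]
    · have h2p : 2 * p ≠ 0 := mul_ne_zero h20 hp
      have h0 : algebraMap K L (2 * p) ≠ 0 := by
        rwa [Ne, map_eq_zero]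
      have hv2 := hram _ h2p
      by_contra hne
      rcases lt_or_gt_of_ne hne with hlt | hgt
      · have h1 := wL.V_add_not hπ'0 rfl (y := π) (Or.inr (by omega))
        rw [add_comm π' π, hadd, wL.V_iff h0] at h1
        have h3 : wL.V (wL.v π') (π + π') := wL.V_add (Or.inr (by omega)) (Or.inr le_rfl)
        rw [hadd, wL.V_iff h0] at h3
        omega
      · have h1 := wL.V_add_not hπ0 rfl (y := π') (Or.inr (by omega))
        rw [hadd, wL.V_iff h0] at h1
        have h3 : wL.V 1 (π + π') := wL.V_add (Or.inr (by omega)) (Or.inr (by omega))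
        rw [hadd, wL.V_iff h0] at h3
        omega
  have hP1 : w.v P = 1 := by omega
  -- a non-norm in `U_1`
  have hnon : ∃ u : K, w.V 1 (u - 1) ∧ ¬ ∃ y : L, y ≠ 0 ∧ Algebra.norm K y = u := by
    by_cases hp : p = 0 ∨ 1 ≤ w.v p
    · have hpV : w.V 2 (p ^ 2) := by
        rw [sq]; exact w.V_mul' (m := 1) (n := 1) hp hp (by omega)
      have hD0 : P - p ^ 2 ≠ 0 := by
        rw [hPdef]
        have : q ^ 2 * d ≠ 0 := mul_ne_zero (pow_ne_zero 2 hq) hd0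
        intro h
        apply this
        linear_combination -h
      have hD1 : w.v (P - p ^ 2) = 1 := by
        have h1 := w.V_sub (m := 1) (Or.inr hP1.ge) (w.V_mono (by omega) hpV)
        rw [w.V_iff hD0] at h1
        have h3 := w.V_add_not hP hP1 (y := -p ^ 2) (w.V_neg hpV)
        rw [← sub_eq_add_neg, w.V_iff hD0] at h3
        omega
      obtain ⟨u, hu, hab⟩ := w.caseB hres h20 he hD0 hD1
      refine ⟨u, hu, ?_⟩
      rintro ⟨y, -, hy⟩
      obtain ⟨a, b, rfl⟩ := hrep y
      rw [hnm] at hy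
      apply hab a (b / q)
      rw [← hy, hPdef]
      field_simp
      ring
    · push Not at hp
      obtain ⟨hp0, hp1⟩ := hp
      have h2p : 2 * p ≠ 0 := mul_ne_zero h20 hp0
      have hv := w.v_mul h20 hp0
      have h1 : 1 ≤ w.v (2 * p) := by
        have h0 : algebraMap K L (2 * p) ≠ 0 := by
          rwa [Ne, map_eq_zero]
        have h3 : wL.V 1 (π + π') := wL.V_add (Or.inr (by omega)) (Or.inr (by omega))
        rw [hadd, wL.V_iff h0, hram _ h2p] at h3
        omega
      obtain ⟨u, hu, hab⟩ := w.caseA hres hP hP1 h2p h1 (by omega)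
      refine ⟨u, hu, ?_⟩
      rintro ⟨y, -, hy⟩
      obtain ⟨a, b, rfl⟩ := hrep y
      rw [hnm] at hy
      apply hab (a - b / q * p) (b / q)
      rw [← hy, hPdef]
      field_simp
      ring
  -- all of `U_M` consists of norms
  have hall : ∀ u : K, w.V ((M + 1 : ℕ) : ℤ) (u - 1) →
      ∃ y : L, y ≠ 0 ∧ Algebra.norm K y = u := by
    intro u hu
    obtain ⟨c, hc⟩ := hM u (w.V_mono (by push_cast; omega) hu)
    refine ⟨algebraMap K L c, ?_, ?_⟩
    · intro h
      rw [map_eq_zero] at h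
      rw [hc, h, mul_zero, zero_sub, w.V_iff (by simp), w.v_neg_one] at hu
      push_cast at hu
      omega
    · rw [Algebra.norm_algebraMap, hL2, hc, sq]
  classical
  have hex : ∃ n : ℕ, ∀ u : K, w.V ((n + 1 : ℕ) : ℤ) (u - 1) →
      ∃ y : L, y ≠ 0 ∧ Algebra.norm K y = u := ⟨M, hall⟩
  have hspec := Nat.find_spec hex
  have hmin := fun m => Nat.find_min hex (m := m)
  generalize Nat.find hex = n at hspec hmin
  have hn : 1 ≤ n := by
    by_contra hn0
    have : n = 0 := by omega
    subst this
    obtain ⟨u, hu, hne⟩ := hnon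
    exact hne (hspec u (by simpa using hu))
  refine ⟨n, hn, fun u hu => hspec u (by simpa using hu), ?_⟩
  have h := hmin (n - 1) (by omega)
  rw [Nat.sub_add_cancel hn] at h
  push Not at h
  obtain ⟨u, hu, hne⟩ := h
  refine ⟨u, hu, ?_⟩
  rintro ⟨y, hy0, hy⟩
  exact hne y hy0 hy
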